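/- arXiv:1402.3450 — 2 statements merged into one kernel-verified Lean document; each statement's English description precedes it below -/
import Mathlib

section
/- For every natural number k ≥ 2 and every η ≥ 0, the (1+η)-stretch of nae-(2,k)-Flip games is at most 3+kη: for every nae-(2,k)-Flip game and every two (1+η)-approximate pure Nash equilibria S and S' of the game, Φ(S') ≤ (3+kη)·Φ(S). -/
/-!
Let `D` be the set of variables on which `S` and
`S'` differ; since both are states, `D ⊆ N`. Add up the equilibrium inequalities
`u_j(S_{-j}) ≤ (1+η) u_j(S)` at `S` over `j ∈ D` and read the result clause by clause, for a clause `c`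
with `d` variables in `D`.

* If `c` is unsatisfied at `S`, each of its `d` variables contributes `w_c` on the left, and `d ≥ 1`
  when `c` is satisfied at `S'`.
* If `c` is satisfied at `S`, at most two of its variables are critical, in the sense that flipping
  them makes `c` unsatisfied (`card_critical_le_two`). So the left side has at least `(d - 2) w_c`,
  the right side `(1+η) d w_c`, and `d ≤ k`.

Hence every clause contributes at least `([c sat at S'] - (3+kη) [c sat at S]) w_c` to the
left side minus the right side (`clause_bound`), and the sum of these contributions is at most `0`.
-/

/-- A `P_k`-Flip game: boolean variables `V`, player-controlled variables `N ⊆ V`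
(variables outside `N` are frozen), and clauses `C` with nonnegative weights,
at most `k` variables each, satisfaction predicates depending only on their own
variables, and the flip property: an unsatisfied clause becomes satisfied when
any one of its variables is flipped. -/
structure PkFlipGame (V C : Type) [Fintype V] [DecidableEq V] [Fintype C] (k : ℕ) where
  /-- the player-controlled variables -/
  N : Finset V
  /-- frozen values for the variables outside `N` -/
  frozen : V → Bool
  /-- clause weights -/
  w : C → ℝ
  w_nonneg : ∀ c, 0 ≤ w c
  /-- the variables of each clause -/
  vars : C → Finset V
  vars_card_le : ∀ c, (vars c).card ≤ k
  /-- the satisfaction predicate of each clause -/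
  sat : C → (V → Bool) → Bool
  sat_depends : ∀ c (S S' : V → Bool), (∀ v ∈ vars c, S v = S' v) → sat c S = sat c S'
  flip_sat : ∀ c (S : V → Bool) (j : V), j ∈ vars c → sat c S = false →
    sat c (Function.update S j (!S j)) = true

variable {V C : Type} [Fintype V] [DecidableEq V] [Fintype C] {k : ℕ}

/-- The state obtained from `S` by flipping the value of variable `j`. -/
def flipVar (S : V → Bool) (j : V) : V → Bool := Function.update S j (!S j)

namespace PkFlipGame

/-- A state of the game: agrees with the frozen values outside `N`. -/
def IsState (G : PkFlipGame V C k) (S : V → Bool) : Prop :=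
  ∀ v, v ∉ G.N → S v = G.frozen v

/-- Utility of player `j`: total weight of satisfied clauses containing `j`'s variable. -/
def util (G : PkFlipGame V C k) (j : V) (S : V → Bool) : ℝ :=
  ∑ c ∈ Finset.univ.filter (fun c => j ∈ G.vars c ∧ G.sat c S = true), G.w c

/-- The potential: total weight of satisfied clauses. -/
def potential (G : PkFlipGame V C k) (S : V → Bool) : ℝ :=
  ∑ c ∈ Finset.univ.filter (fun c => G.sat c S = true), G.w c

/-- Maximum possible utility `U_j` of player `j`: total weight of clauses containing `j`. -/
def maxUtil (G : PkFlipGame V C k) (j : V) : ℝ :=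
  ∑ c ∈ Finset.univ.filter (fun c => j ∈ G.vars c), G.w c

/-- The subgame potential `Φ_R`: total weight of satisfied clauses containing a
variable of some player in `R`. -/
def subPotential (G : PkFlipGame V C k) (R : Finset V) (S : V → Bool) : ℝ :=
  ∑ c ∈ Finset.univ.filter (fun c => G.sat c S = true ∧ ∃ j ∈ R, j ∈ G.vars c), G.w c

/-- A `ρ`-approximate pure Nash equilibrium: a state where no player can increase
her utility by more than a factor `ρ` by flipping her variable. -/
def IsApproxEquilibrium (G : PkFlipGame V C k) (ρ : ℝ) (S : V → Bool) : Prop :=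
  G.IsState S ∧ ∀ j ∈ G.N, G.util j (flipVar S j) ≤ ρ * G.util j S

/-- A pure Nash equilibrium: no player can strictly increase her utility. -/
def IsPNE (G : PkFlipGame V C k) (S : V → Bool) : Prop :=
  G.IsState S ∧ ∀ j ∈ G.N, G.util j (flipVar S j) ≤ G.util j S

end PkFlipGame

/-- Value of a literal `(v, neg)` under a state `S`: `S v`, negated if `neg`. -/
def litVal (S : V → Bool) (l : V × Bool) : Bool := xor (S l.1) l.2

/-- A `nae`-`(kbar, k)`-Flip game: a `P_k`-Flip game whose clauses are
not-all-equal clauses with at least `kbar` and at most `k` literals over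
distinct variables; a clause is satisfied iff two of its literals differ. -/
structure NaeFlipGame (V C : Type) [Fintype V] [DecidableEq V] [Fintype C] (kbar k : ℕ)
    extends PkFlipGame V C k where
  /-- the list of literals of each clause -/
  lits : C → List (V × Bool)
  lits_length_lb : ∀ c, kbar ≤ (lits c).length
  lits_length_ub : ∀ c, (lits c).length ≤ k
  lits_nodup : ∀ c, ((lits c).map Prod.fst).Nodup
  vars_eq : ∀ c, vars c = ((lits c).map Prod.fst).toFinset
  sat_iff : ∀ c (S : V → Bool), sat c S = true ↔
    ∃ l₁ ∈ lits c, ∃ l₂ ∈ lits c, litVal S l₁ ≠ litVal S l₂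

namespace NaeFlipGame

lemma litVal_eq_of_unsat {V C : Type} [Fintype V] [DecidableEq V] [Fintype C] {kbar k : ℕ}
    (G : NaeFlipGame V C kbar k) (c : C) (T : V → Bool) (h : G.sat c T = false)
    {l₁ l₂ : V × Bool} (h₁ : l₁ ∈ G.lits c) (h₂ : l₂ ∈ G.lits c) :
    litVal T l₁ = litVal T l₂ := by
  by_contra hne
  have := (G.sat_iff c T).2 ⟨l₁, h₁, l₂, h₂, hne⟩
  simp [h] at this

lemma exists_lit {V C : Type} [Fintype V] [DecidableEq V] [Fintype C] {kbar k : ℕ}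
    (G : NaeFlipGame V C kbar k) (c : C) {j : V} (h : j ∈ G.vars c) :
    ∃ b, (j, b) ∈ G.lits c := by
  rw [G.vars_eq] at h
  simpa using h

/-- A not-all-equal clause has at most two critical variables at any state: if flipping any of
`a`, `b`, `d` made all literals equal, then the flip of `d` would show that the literals of `a` and
`b` agree, while the flip of `a` shows that they differ. -/
lemma card_critical_le_two {V C : Type} [Fintype V] [DecidableEq V] [Fintype C] {kbar k : ℕ}
    (G : NaeFlipGame V C kbar k) (c : C) (S : V → Bool) (A : Finset V) (hA : A ⊆ G.vars c) :
    (A.filter (fun j => ¬ G.sat c (flipVar S j) = true)).card ≤ 2 := by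
  by_contra hlt
  rw [not_le, Finset.two_lt_card] at hlt
  obtain ⟨a, ha, b, hb, d, hd, hab, had, hbd⟩ := hlt
  simp only [Finset.mem_filter, Bool.not_eq_true] at ha hb hd
  obtain ⟨x, hx⟩ := G.exists_lit c (hA ha.1)
  obtain ⟨y, hy⟩ := G.exists_lit c (hA hb.1)
  obtain ⟨z, hz⟩ := G.exists_lit c (hA hd.1)
  have h1 := G.litVal_eq_of_unsat c _ ha.2 hx hy
  have h2 := G.litVal_eq_of_unsat c _ hd.2 hx hy
  simp only [litVal, flipVar, Function.update_self, Function.update_of_ne hab.symm,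
    Function.update_of_ne had, Function.update_of_ne hbd] at h1 h2
  revert h1 h2
  cases S a <;> cases S b <;> cases x <;> cases y <;> simp

/-- The contribution of one clause to the summed equilibrium inequalities. -/
lemma clause_bound {V C : Type} [Fintype V] [DecidableEq V] [Fintype C] {kbar k : ℕ}
    (G : NaeFlipGame V C kbar k) (η : ℝ) (hη : 0 ≤ η) (S S' : V → Bool) (D : Finset V)
    (hD : ∀ v, v ∉ D → S v = S' v) (c : C) :
    (if G.sat c S' = true then G.w c else 0)
        - (3 + (k : ℝ) * η) * (if G.sat c S = true then G.w c else 0) ≤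
      (∑ j ∈ D, if j ∈ G.vars c ∧ G.sat c (flipVar S j) = true then G.w c else 0)
        - (1 + η) * ∑ j ∈ D, if j ∈ G.vars c ∧ G.sat c S = true then G.w c else 0 := by
  have hw := G.w_nonneg c
  set A := D.filter (fun j => j ∈ G.vars c) with hAdef
  have hA : A ⊆ G.vars c := fun j hj => (Finset.mem_filter.1 hj).2
  have e1 : (∑ j ∈ D, if j ∈ G.vars c ∧ G.sat c (flipVar S j) = true then G.w c else 0)
      = ((A.filter (fun j => G.sat c (flipVar S j) = true)).card : ℝ) * G.w c := by
    rw [← Finset.sum_filter, Finset.sum_const, nsmul_eq_mul, hAdef, Finset.filter_filter]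
  rw [e1]
  by_cases hs : G.sat c S = true
  · have e2 : (∑ j ∈ D, if j ∈ G.vars c ∧ G.sat c S = true then G.w c else 0)
        = (A.card : ℝ) * G.w c := by
      simp only [hs, and_true]
      rw [← Finset.sum_filter, Finset.sum_const, nsmul_eq_mul]
    rw [e2, if_pos hs]
    have hcard : (A.card : ℝ) ≤
        ((A.filter (fun j => G.sat c (flipVar S j) = true)).card : ℝ) + 2 := by
      have h1 := Finset.card_filter_add_card_filter_not (s := A)
        (fun j => G.sat c (flipVar S j) = true)
      have h2 := G.card_critical_le_two c S A hA
      exact_mod_cast (by omega)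
    have hAk : (A.card : ℝ) ≤ k := by
      exact_mod_cast (Finset.card_le_card hA).trans (G.vars_card_le c)
    have hS' : (if G.sat c S' = true then G.w c else 0) ≤ G.w c := by
      split_ifs <;> simp [hw]
    have m1 := mul_le_mul_of_nonneg_right hcard hw
    have m2 := mul_le_mul_of_nonneg_right (mul_le_mul_of_nonneg_right hAk hη) hw
    nlinarith
  · have e2 : (∑ j ∈ D, if j ∈ G.vars c ∧ G.sat c S = true then G.w c else 0) = 0 :=
      Finset.sum_eq_zero fun j _ => if_neg fun h => hs h.2
    rw [e2, if_neg hs, mul_zero, mul_zero, sub_zero, sub_zero]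
    split_ifs with hs'
    · have hpos : 1 ≤ (A.filter (fun j => G.sat c (flipVar S j) = true)).card := by
        -- otherwise `S` and `S'` agree on `vars c`, so `c` has the same status at both
        by_contra hlt
        have hempty : A.filter (fun j => G.sat c (flipVar S j) = true) = ∅ :=
          Finset.card_eq_zero.1 (by omega)
        refine hs ((G.sat_depends c S S' fun v hv => hD v fun hvD => ?_).trans hs')
        have hmem : v ∈ A.filter (fun j => G.sat c (flipVar S j) = true) := by
          simp only [hAdef, Finset.mem_filter]
          exact ⟨⟨hvD, hv⟩, G.flip_sat c S v hv (by simpa using hs)⟩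
        simp [hempty] at hmem
      have hpos' : (1 : ℝ) ≤
          ((A.filter (fun j => G.sat c (flipVar S j) = true)).card : ℝ) := by
        exact_mod_cast hpos
      nlinarith
    · positivity

end NaeFlipGame

/-- For every `k ≥ 2` and `η ≥ 0`, the `(1+η)`-stretch of `nae`-`(2,k)`-Flip games
is at most `3 + kη`. -/
theorem nae2_stretch {V C : Type} [Fintype V] [DecidableEq V] [Fintype C]
    (k : ℕ) (hk : 2 ≤ k) (η : ℝ) (hη : 0 ≤ η)
    (G : NaeFlipGame V C 2 k) (S S' : V → Bool)
    (hS : G.toPkFlipGame.IsApproxEquilibrium (1 + η) S)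
    (hS' : G.toPkFlipGame.IsApproxEquilibrium (1 + η) S') :
    G.toPkFlipGame.potential S' ≤ (3 + (k : ℝ) * η) * G.toPkFlipGame.potential S := by
  set D : Finset V := Finset.univ.filter (fun v => S v ≠ S' v) with hDdef
  have hDN : ∀ j ∈ D, j ∈ G.N := by
    intro j hj
    by_contra hjN
    exact (Finset.mem_filter.1 hj).2 ((hS.1 j hjN).trans (hS'.1 j hjN).symm)
  have hD : ∀ v, v ∉ D → S v = S' v := by
    intro v hv
    simpa [hDdef] using hv
  have hsum := Finset.sum_le_sum fun j hj => hS.2 j (hDN j hj)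
  have hclauses := Finset.sum_le_sum
    fun c (_ : c ∈ Finset.univ) => G.clause_bound η hη S S' D hD c
  simp only [Finset.sum_sub_distrib, ← Finset.mul_sum] at hclauses hsum
  rw [Finset.sum_comm, Finset.sum_comm (s := Finset.univ) (t := D)] at hclauses
  simp only [PkFlipGame.util, Finset.sum_filter] at hsum
  simp only [PkFlipGame.potential, Finset.sum_filter]
  linarith
end

section
/- There exists a constant C > 0 such that the following holds. For every nae-(3,k)-Flip game G with n players, every state S_in of G, and every ε ∈ (0,1], there exists a sequence of states S_in = S_0, S_1, ..., S_T with T ≤ C·n^3·k^2/ε^4, where for each t < T the state S_{t+1} is obtained from S_t by flipping the variable of a single player j_t ∈ N with u_{j_t}(S_{t+1}) > u_{j_t}(S_t) (an improvement move), and S_T is a (2+ε)-approximate pure Nash equilibrium of G. -/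
variable {V C : Type} [Fintype V] [DecidableEq V] [Fintype C] {k : ℕ}

namespace PkFlipGame

/-! ### Elementary facts on utilities and the potential -/

lemma util_eq (G : PkFlipGame V C k) (j : V) (S : V → Bool) :
    G.util j S = ∑ c, if j ∈ G.vars c ∧ G.sat c S = true then G.w c else 0 := by
  rw [util, Finset.sum_filter]

lemma potential_eq (G : PkFlipGame V C k) (S : V → Bool) :
    G.potential S = ∑ c, if G.sat c S = true then G.w c else 0 := by
  rw [potential, Finset.sum_filter]

lemma maxUtil_eq (G : PkFlipGame V C k) (j : V) :
    G.maxUtil j = ∑ c, if j ∈ G.vars c then G.w c else 0 := by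
  rw [maxUtil, Finset.sum_filter]

lemma util_nonneg (G : PkFlipGame V C k) (j : V) (S : V → Bool) : 0 ≤ G.util j S :=
  Finset.sum_nonneg fun c _ => G.w_nonneg c

lemma maxUtil_nonneg (G : PkFlipGame V C k) (j : V) : 0 ≤ G.maxUtil j :=
  Finset.sum_nonneg fun c _ => G.w_nonneg c

lemma util_le_maxUtil (G : PkFlipGame V C k) (j : V) (S : V → Bool) :
    G.util j S ≤ G.maxUtil j := by
  rw [util_eq, maxUtil_eq]
  refine Finset.sum_le_sum fun c _ => ?_
  have := G.w_nonneg c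
  by_cases h1 : j ∈ G.vars c <;> by_cases h2 : G.sat c S = true <;> simp [h1, h2, this]

lemma sat_flip_of_notMem (G : PkFlipGame V C k) {c : C} {j : V} (S : V → Bool)
    (h : j ∉ G.vars c) : G.sat c (flipVar S j) = G.sat c S := by
  apply G.sat_depends
  intro v hv
  have : v ≠ j := fun e => h (e ▸ hv)
  simp [flipVar, this]

lemma potential_flip (G : PkFlipGame V C k) (j : V) (S : V → Bool) :
    G.potential (flipVar S j) - G.potential S = G.util j (flipVar S j) - G.util j S := by
  rw [util_eq, util_eq, potential_eq, potential_eq, ← Finset.sum_sub_distrib,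
    ← Finset.sum_sub_distrib]
  refine Finset.sum_congr rfl fun c _ => ?_
  by_cases h : j ∈ G.vars c
  · simp [h]
  · simp [h, G.sat_flip_of_notMem S h]

lemma maxUtil_le (G : PkFlipGame V C k) (j : V) (S : V → Bool) :
    G.maxUtil j ≤ G.util j S + G.util j (flipVar S j) := by
  rw [util_eq, util_eq, maxUtil_eq, ← Finset.sum_add_distrib]
  refine Finset.sum_le_sum fun c _ => ?_
  have hw := G.w_nonneg c
  by_cases h : j ∈ G.vars c
  · by_cases h2 : G.sat c S = true
    · simp only [h, h2, and_self, if_true, true_and]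
      split_ifs <;> linarith
    · have h3 : G.sat c (flipVar S j) = true := G.flip_sat c S j h (by simpa using h2)
      simp [h, h2, h3]
  · simp [h]

/-! ### Sequences of moves -/

set_option linter.unusedSectionVars false

/-- The state reached from `S` by flipping the variables of the list `L` one after the other. -/
def run (S : V → Bool) : List V → (V → Bool)
  | [] => S
  | j :: L => run (flipVar S j) L

/-- Every flip of the list `L`, played from `S`, satisfies the move predicate `Mv`. -/
def Valid (Mv : (V → Bool) → V → Prop) (S : V → Bool) : List V → Prop
  | [] => True
  | j :: L => Mv S j ∧ Valid Mv (flipVar S j) L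

lemma run_append (S : V → Bool) (L L' : List V) : run S (L ++ L') = run (run S L) L' := by
  induction L generalizing S with
  | nil => rfl
  | cons j L ih => simp [run, ih]

lemma valid_append {Mv : (V → Bool) → V → Prop} {S : V → Bool} {L L' : List V}
    (h : Valid Mv S L) (h' : Valid Mv (run S L) L') : Valid Mv S (L ++ L') := by
  induction L generalizing S with
  | nil => exact h'
  | cons j L ih => exact ⟨h.1, ih h.2 h'⟩

lemma Valid.mono {Mv Mv' : (V → Bool) → V → Prop} (hM : ∀ S j, Mv S j → Mv' S j)
    {S : V → Bool} {L : List V} (h : Valid Mv S L) : Valid Mv' S L := by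
  induction L generalizing S with
  | nil => trivial
  | cons j L ih => exact ⟨hM _ _ h.1, ih h.2⟩

lemma Valid.forall_mem {Mv : (V → Bool) → V → Prop} {p : V → Prop} (hM : ∀ S j, Mv S j → p j)
    {S : V → Bool} {L : List V} (h : Valid Mv S L) : ∀ j ∈ L, p j := by
  induction L generalizing S with
  | nil => simp
  | cons j L ih =>
    intro i hi
    rcases List.mem_cons.1 hi with rfl | hi
    · exact hM _ _ h.1
    · exact ih h.2 i hi

lemma Valid.take_succ {Mv : (V → Bool) → V → Prop} {S : V → Bool} {L : List V}
    (h : Valid Mv S L) (t : ℕ) (ht : t < L.length) :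
    ∃ j, Mv (run S (L.take t)) j ∧ run S (L.take (t + 1)) = flipVar (run S (L.take t)) j := by
  induction L generalizing S t with
  | nil => simp at ht
  | cons j L ih =>
    cases t with
    | zero => exact ⟨j, h.1, by simp [run]⟩
    | succ t =>
      obtain ⟨i, h1, h2⟩ := ih h.2 t (by simpa using ht)
      exact ⟨i, by simpa [run] using h1, by simpa [run] using h2⟩

lemma run_of_notMem (S : V → Bool) (L : List V) (v : V) (h : v ∉ L) : run S L v = S v := by
  induction L generalizing S with
  | nil => rfl
  | cons j L ih =>
    simp only [List.mem_cons, not_or] at h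
    rw [run, ih _ h.2]
    simp [flipVar, h.1]

lemma isState_run (G : PkFlipGame V C k) {S : V → Bool} (hS : G.IsState S) {L : List V}
    (hL : ∀ j ∈ L, j ∈ G.N) : G.IsState (run S L) := fun v hv => by
  rw [run_of_notMem S L v fun h => hv (hL v h)]
  exact hS v hv

lemma sat_run (G : PkFlipGame V C k) {c : C} (S : V → Bool) (L : List V)
    (h : ∀ j ∈ L, j ∉ G.vars c) : G.sat c (run S L) = G.sat c S :=
  G.sat_depends c _ _ fun v hv => run_of_notMem S L v fun hvL => h v hvL hv

/-- If the potential grows by at least `γ > 0` along each move but by at most `K` along any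
valid sequence, then some valid sequence ends in a state without valid moves. -/
lemma exists_stuck (G : PkFlipGame V C k) {Mv : (V → Bool) → V → Prop} {S : V → Bool} {γ K : ℝ}
    (hγ : 0 < γ) (hstep : ∀ S j, Mv S j → γ ≤ G.potential (flipVar S j) - G.potential S)
    (hK : ∀ L, Valid Mv S L → G.potential (run S L) - G.potential S ≤ K) :
    ∃ L, Valid Mv S L ∧ L.length * γ ≤ K ∧ ∀ j, ¬ Mv (run S L) j := by
  have hlen : ∀ (L : List V) (S), Valid Mv S L →
      L.length * γ ≤ G.potential (run S L) - G.potential S := by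
    intro L
    induction L with
    | nil => intro S _; simp [run]
    | cons j L ih =>
      intro S h
      have h1 := ih _ h.2
      have h2 := hstep _ _ h.1
      rw [run]
      push_cast [List.length_cons]
      linarith
  by_contra! hcon
  have hall : ∀ n : ℕ, ∃ L, Valid Mv S L ∧ L.length = n := by
    intro n
    induction n with
    | zero => exact ⟨[], trivial, rfl⟩
    | succ n ih =>
      obtain ⟨L, hL, hn⟩ := ih
      obtain ⟨j, hj⟩ := hcon L hL ((hlen L S hL).trans (hK L hL))
      exact ⟨L ++ [j], valid_append hL ⟨hj, trivial⟩, by simp [hn]⟩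
  obtain ⟨n, hn⟩ := exists_nat_gt (K / γ)
  obtain ⟨L, hL, rfl⟩ := hall n
  rw [div_lt_iff₀ hγ] at hn
  linarith [hlen L S hL, hK L hL]

/-! ### One phase -/

/-- The moves allowed in a phase with big players `X` and small players `Y`: a player of `X`
has to multiply her utility by more than `q`, a player of `Y` has to gain more than `γ`. -/
def PhaseMove (G : PkFlipGame V C k) (X Y : Finset V) (q γ : ℝ) (S : V → Bool) (j : V) : Prop :=
  (j ∈ X ∧ q * G.util j S < G.util j (flipVar S j)) ∨
    (j ∈ Y ∧ G.util j S + γ < G.util j (flipVar S j))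

/-- The clauses that avoid `Y` and contain a player of `X` that occurs in `L`. -/
def Core (G : PkFlipGame V C k) (X Y : Finset V) (L : List V) (c : C) : Prop :=
  (∃ j ∈ X, j ∈ L ∧ j ∈ G.vars c) ∧ ∀ j ∈ Y, j ∉ G.vars c

open Classical in
/-- The weight of the satisfied `Core` clauses. -/
noncomputable def corePot (G : PkFlipGame V C k) (X Y : Finset V) (L : List V) (S : V → Bool) : ℝ :=
  ∑ c, if G.Core X Y L c ∧ G.sat c S = true then G.w c else 0

open Classical in
/-- The weight of the clauses that contain a variable of `Y`. -/
noncomputable def touchWeight (G : PkFlipGame V C k) (Y : Finset V) : ℝ :=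
  ∑ c, if ∃ j ∈ Y, j ∈ G.vars c then G.w c else 0

lemma corePot_nonneg (G : PkFlipGame V C k) (X Y : Finset V) (L : List V) (S : V → Bool) :
    0 ≤ G.corePot X Y L S :=
  Finset.sum_nonneg fun c _ => by
    have := G.w_nonneg c
    split_ifs <;> simp [this]

lemma touchWeight_le (G : PkFlipGame V C k) {Y : Finset V} {β : ℝ}
    (h : ∀ j ∈ Y, G.maxUtil j ≤ β) : G.touchWeight Y ≤ Y.card * β := by
  classical
  calc G.touchWeight Y ≤ ∑ j ∈ Y, G.maxUtil j := by
        simp only [maxUtil_eq]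
        rw [Finset.sum_comm, touchWeight]
        refine Finset.sum_le_sum fun c _ => ?_
        have hw := G.w_nonneg c
        have hn : ∀ i ∈ Y, 0 ≤ (if i ∈ G.vars c then G.w c else 0) := fun i _ => by
          split_ifs <;> simp [hw]
        split_ifs with hc
        · obtain ⟨j, hj, hjc⟩ := hc
          have := Finset.single_le_sum hn hj
          simpa [hjc] using this
        · exact Finset.sum_nonneg hn
    _ ≤ ∑ _j ∈ Y, β := Finset.sum_le_sum h
    _ = Y.card * β := by simp

/-- Accounting by last moves: a core clause satisfied at the end is already satisfied right after
the last move of its last moving player, so the last moves of the big players alone raise the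
potential by a `(1 - 1/q)`-fraction of the final core potential. The induction prepends moves;
the big players' last moves are those where the set of movers grows. -/
lemma corePot_le_gain (G : PkFlipGame V C k) {X Y : Finset V} {q γ : ℝ} (hq : 1 ≤ q) (hγ : 0 ≤ γ)
    (L : List V) (S : V → Bool) (hL : Valid (G.PhaseMove X Y q γ) S L) :
    (q - 1) * G.corePot X Y L (run S L) ≤ q * (G.potential (run S L) - G.potential S) := by
  classical
  induction L generalizing S with
  | nil => simp [corePot, Core, run]
  | cons j L ih =>
    obtain ⟨hj, hL⟩ := hL
    have h1 := ih _ hL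
    have h2 := G.potential_flip j S
    have hu := G.util_nonneg j S
    have hmem := hL.forall_mem (p := fun i => i ∈ X ∨ i ∈ Y)
      (fun S j h => h.elim (fun h => Or.inl h.1) fun h => Or.inr h.1)
    rw [run]
    by_cases hnew : j ∈ X ∧ q * G.util j S < G.util j (flipVar S j)
    · have hcp : G.corePot X Y (j :: L) (run (flipVar S j) L) ≤
          G.corePot X Y L (run (flipVar S j) L) + G.util j (flipVar S j) := by
        rw [corePot, corePot, util_eq, ← Finset.sum_add_distrib]
        refine Finset.sum_le_sum fun c _ => ?_
        have hw := G.w_nonneg c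
        by_cases hc : G.Core X Y L c
        · have hc' : G.Core X Y (j :: L) c := by
            obtain ⟨⟨i, hi, hiL, hic⟩, hY⟩ := hc
            exact ⟨⟨i, hi, List.mem_cons_of_mem _ hiL, hic⟩, hY⟩
          simp only [hc, hc', true_and]
          split_ifs <;> linarith
        · by_cases hc' : G.Core X Y (j :: L) c
          · obtain ⟨⟨i, hi, hiL, hic⟩, hY⟩ := hc'
            have hfix : ∀ i ∈ L, i ∉ G.vars c := by
              intro i hi hic
              rcases hmem i hi with h | h
              · exact hc ⟨⟨i, h, hi, hic⟩, hY⟩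
              · exact hY i h hic
            have hij : i = j := by
              rcases List.mem_cons.1 hiL with h | h
              · exact h
              · exact absurd hic (hfix i h)
            subst hij
            rw [G.sat_run _ L hfix]
            have hc' : G.Core X Y (i :: L) c := ⟨⟨i, hi, hiL, hic⟩, hY⟩
            simp [hc, hc', hic]
          · simp only [hc, hc', false_and, if_false]
            split_ifs <;> simp [hw]
      nlinarith [hnew.2]
    · have hY : j ∈ Y ∧ G.util j S + γ < G.util j (flipVar S j) := hj.resolve_left hnew
      have hcp : G.corePot X Y (j :: L) (run (flipVar S j) L) ≤
          G.corePot X Y L (run (flipVar S j) L) := by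
        rw [corePot, corePot]
        refine Finset.sum_le_sum fun c _ => ?_
        have hw := G.w_nonneg c
        by_cases hc' : G.Core X Y (j :: L) c
        · have hc : G.Core X Y L c := by
            obtain ⟨⟨i, hi, hiL, hic⟩, hYc⟩ := hc'
            refine ⟨⟨i, hi, ?_, hic⟩, hYc⟩
            rcases List.mem_cons.1 hiL with rfl | h
            · exact absurd hic (hYc _ hY.1)
            · exact h
          simp [hc, hc']
        · simp only [hc', false_and, if_false]
          split_ifs <;> simp [hw]
      nlinarith [hY.2]

lemma gain_le_corePot (G : PkFlipGame V C k) {X Y : Finset V} (L : List V) (S : V → Bool)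
    (hL : ∀ j ∈ L, j ∈ X ∨ j ∈ Y) :
    G.potential (run S L) - G.potential S ≤
      G.corePot X Y L (run S L) - G.corePot X Y L S + G.touchWeight Y := by
  classical
  rw [potential_eq, potential_eq, corePot, corePot, touchWeight, ← Finset.sum_sub_distrib,
    ← Finset.sum_sub_distrib, ← Finset.sum_add_distrib]
  refine Finset.sum_le_sum fun c _ => ?_
  have hw := G.w_nonneg c
  by_cases hY : ∃ j ∈ Y, j ∈ G.vars c
  · have hc : ¬ G.Core X Y L c := by
      rintro ⟨-, h⟩
      obtain ⟨j, hj, hjc⟩ := hY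
      exact h j hj hjc
    simp only [hY, hc, false_and, if_false, if_true]
    split_ifs <;> linarith
  · by_cases hc : G.Core X Y L c
    · simp [hY, hc]
    · have hY' : ∀ j ∈ Y, j ∉ G.vars c := fun j hj hjc => hY ⟨j, hj, hjc⟩
      have hfix : ∀ j ∈ L, j ∉ G.vars c := by
        intro j hj hjc
        rcases hL j hj with h | h
        · exact hc ⟨⟨j, h, hj, hjc⟩, hY'⟩
        · exact hY' j h hjc
      simp [hY, hc, G.sat_run S L hfix]

/-- No satisfied clause is broken by two different single flips. For not-all-equal clauses this
is the case as soon as they have three literals. -/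
def OneCritical (G : PkFlipGame V C k) : Prop :=
  ∀ c S i j, i ∈ G.vars c → j ∈ G.vars c → G.sat c S = true →
    G.sat c (flipVar S i) = false → G.sat c (flipVar S j) = false → i = j

/-- Stretch bound: if no big player gains more than `β` at `S`, the unsatisfied core clauses weigh
essentially no more than the satisfied ones, as each satisfied clause has at most one critical
player while each unsatisfied one is fixed by any of its players. -/
lemma corePot_stretch (G : PkFlipGame V C k) (hcrit : G.OneCritical) {X Y : Finset V} {β : ℝ}
    (hβ : 0 ≤ β) (L : List V) (S S' : V → Bool)
    (hX : ∀ j ∈ X, G.util j (flipVar S j) - G.util j S ≤ β) :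
    G.corePot X Y L S' ≤ 2 * G.corePot X Y L S + G.touchWeight Y + X.card * β := by
  classical
  set R := X.filter (· ∈ L) with hR
  have hup : ∑ j ∈ R, (G.util j (flipVar S j) - G.util j S) ≤ X.card * β := by
    calc ∑ j ∈ R, (G.util j (flipVar S j) - G.util j S) ≤ ∑ _j ∈ R, β :=
          Finset.sum_le_sum fun j hj => hX j (Finset.mem_filter.1 hj).1
      _ = R.card * β := by simp
      _ ≤ X.card * β := by
          gcongr
          exact Finset.filter_subset _ _
  have hlow : G.corePot X Y L S' ≤ 2 * G.corePot X Y L S + G.touchWeight Y +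
      ∑ j ∈ R, (G.util j (flipVar S j) - G.util j S) := by
    simp only [util_eq, ← Finset.sum_sub_distrib]
    rw [Finset.sum_comm, corePot, corePot, touchWeight, Finset.mul_sum, ← Finset.sum_add_distrib,
      ← Finset.sum_add_distrib]
    refine Finset.sum_le_sum fun c _ => ?_
    have hw := G.w_nonneg c
    set f : V → ℝ := fun j => (if j ∈ G.vars c ∧ G.sat c (flipVar S j) = true then G.w c else 0) -
      (if j ∈ G.vars c ∧ G.sat c S = true then G.w c else 0) with hf
    change _ ≤ _ + ∑ j ∈ R, f j
    have h1 : (if G.Core X Y L c ∧ G.sat c S' = true then G.w c else 0) ≤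
        if G.Core X Y L c then G.w c else 0 := by
      by_cases hc : G.Core X Y L c <;> by_cases h : G.sat c S' = true <;> simp [hc, h, hw]
    refine h1.trans ?_
    by_cases hs : G.sat c S = true
    · -- a satisfied clause: at most one summand is negative
      have hf0 : ∀ j, j ∉ G.vars c ∨ G.sat c (flipVar S j) = true → f j = 0 := by
        rintro j (h | h)
        · simp [hf, h]
        · simp [hf, h, hs]
      by_cases hex : ∃ i ∈ R, i ∈ G.vars c ∧ G.sat c (flipVar S i) = false
      · obtain ⟨i, hiR, hi, hif⟩ := hex
        have hsum : ∑ j ∈ R, f j = - G.w c := by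
          rw [Finset.sum_eq_single_of_mem i hiR]
          · simp [hf, hi, hif, hs]
          · intro j _ hji
            apply hf0
            by_contra! hcon
            exact hji (hcrit c S j i hcon.1 hi hs (by simpa using hcon.2) hif)
        rw [hsum]
        by_cases hc : G.Core X Y L c
        · simp only [hc, hs, and_self, if_true]
          split_ifs <;> linarith
        · have hY : ∃ j ∈ Y, j ∈ G.vars c := by
            by_contra! hY
            exact hc ⟨⟨i, (Finset.mem_filter.1 hiR).1, (Finset.mem_filter.1 hiR).2, hi⟩, hY⟩
          simp [hc, hY]
      · have hsum : ∑ j ∈ R, f j = 0 := by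
          refine Finset.sum_eq_zero fun j hj => hf0 j ?_
          by_contra! hcon
          exact hex ⟨j, hj, hcon.1, by simpa using hcon.2⟩
        rw [hsum]
        by_cases hc : G.Core X Y L c
        · simp only [hc, hs, and_self, if_true]
          split_ifs <;> linarith
        · simp only [hc, false_and, if_false]
          split_ifs <;> linarith
    · -- an unsatisfied clause: every player of the clause contributes its weight
      have hf1 : ∀ j, j ∈ G.vars c → f j = G.w c := by
        intro j hj
        have h3 : G.sat c (flipVar S j) = true := G.flip_sat c S j hj (by simpa using hs)
        simp [hf, hj, hs, h3]
      have hf0 : ∀ j ∈ R, 0 ≤ f j := by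
        intro j _
        by_cases hj : j ∈ G.vars c
        · rw [hf1 j hj]; exact hw
        · simp [hf, hj]
      by_cases hc : G.Core X Y L c
      · obtain ⟨⟨i, hi, hiL, hic⟩, hY⟩ := id hc
        have h2 := Finset.single_le_sum hf0 (Finset.mem_filter.2 ⟨hi, hiL⟩)
        rw [hf1 i hic] at h2
        simp only [hc, hs, if_true]
        split_ifs <;> simp <;> linarith
      · have h2 := Finset.sum_nonneg hf0
        simp only [hc, hs, if_false]
        split_ifs <;> simp <;> linarith
  linarith

lemma util_drop (G : PkFlipGame V C k) {X Y : Finset V} (L : List V) (S : V → Bool)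
    (hL : ∀ j ∈ L, j ∈ X ∨ j ∈ Y) (i : V) :
    G.util i S - G.util i (run S L) ≤ G.corePot X Y L S + G.touchWeight Y := by
  classical
  rw [util_eq, util_eq, corePot, touchWeight, ← Finset.sum_sub_distrib, ← Finset.sum_add_distrib]
  refine Finset.sum_le_sum fun c _ => ?_
  have hw := G.w_nonneg c
  by_cases hY : ∃ j ∈ Y, j ∈ G.vars c
  · simp only [hY, if_true]
    split_ifs <;> linarith
  · by_cases hc : G.Core X Y L c
    · by_cases hs : G.sat c S = true
      · simp only [hY, hc, hs, if_true, if_false, and_true]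
        split_ifs <;> linarith
      · simp only [hY, hc, hs, if_false, and_false, Bool.false_eq_true]
        split_ifs <;> linarith
    · have hY' : ∀ j ∈ Y, j ∉ G.vars c := fun j hj hjc => hY ⟨j, hj, hjc⟩
      have hfix : ∀ j ∈ L, j ∉ G.vars c := by
        intro j hj hjc
        rcases hL j hj with h | h
        · exact hc ⟨⟨j, h, hj, hjc⟩, hY'⟩
        · exact hY' j h hjc
      simp [hY, hc, G.sat_run S L hfix]

/-- A clause that the flip of `i` satisfies only after the phase was satisfied before the phase,
by the flip property; so the gain is charged to the core potential at the start. -/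
lemma util_flip_rise (G : PkFlipGame V C k) {X Y : Finset V} (L : List V) (S : V → Bool)
    (hL : ∀ j ∈ L, j ∈ X ∨ j ∈ Y) (i : V) (hi : i ∉ L) :
    G.util i (flipVar (run S L) i) - G.util i (flipVar S i) ≤
      G.corePot X Y L S + G.touchWeight Y := by
  classical
  rw [util_eq, util_eq, corePot, touchWeight, ← Finset.sum_sub_distrib, ← Finset.sum_add_distrib]
  refine Finset.sum_le_sum fun c _ => ?_
  have hw := G.w_nonneg c
  by_cases hic : i ∈ G.vars c
  swap
  · simp only [hic, false_and, if_false, sub_zero]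
    split_ifs <;> linarith
  by_cases hY : ∃ j ∈ Y, j ∈ G.vars c
  · simp only [hY, if_true]
    split_ifs <;> linarith
  · by_cases hc : G.Core X Y L c
    · by_cases hs : G.sat c S = true
      · simp only [hY, hc, hs, if_true, if_false, and_self]
        split_ifs <;> linarith
      · have h3 : G.sat c (flipVar S i) = true := G.flip_sat c S i hic (by simpa using hs)
        simp only [hY, hc, hs, hic, h3, if_false, and_self, if_true, true_and]
        split_ifs <;> linarith
    · have hY' : ∀ j ∈ Y, j ∉ G.vars c := fun j hj hjc => hY ⟨j, hj, hjc⟩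
      have hfix : ∀ j ∈ L, j ∉ G.vars c := by
        intro j hj hjc
        rcases hL j hj with h | h
        · exact hc ⟨⟨j, h, hj, hjc⟩, hY'⟩
        · exact hY' j h hjc
      have hsat : G.sat c (flipVar (run S L) i) = G.sat c (flipVar S i) := by
        apply G.sat_depends
        intro v hv
        have hvL : v ∉ L := fun h => hfix v h hv
        by_cases hvi : v = i
        · subst hvi; simp [flipVar, run_of_notMem S L v hi]
        · simp [flipVar, hvi, run_of_notMem S L v hvL]
      simp [hY, hc, hsat]

/-- One phase. It starts from a state where no big player gains more than `β`, and ends in one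
where no big player can multiply her utility by more than `2 + ε/2` and no small player gains more
than `γ`. It is short, and perturbs the utilities of all other players by `O(mβ/ε)` only, where
`m = |X| + |Y|`. -/
lemma exists_phase (G : PkFlipGame V C k) (hcrit : G.OneCritical) {X Y : Finset V}
    {ε β γ : ℝ} (hε : 0 < ε) (hε1 : ε ≤ 1) (hγ : 0 < γ) (hγβ : 4 * γ ≤ β)
    (hXβ : ∀ j ∈ X, β ≤ G.maxUtil j) (hYβ : ∀ j ∈ Y, G.maxUtil j ≤ β) (S : V → Bool)
    (hX : ∀ j ∈ X, G.util j (flipVar S j) - G.util j S ≤ β) :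
    ∃ L : List V, Valid (G.PhaseMove X Y (2 + ε / 2) γ) S L ∧
      L.length * γ ≤ 9 * (X.card + Y.card) * β / ε ∧
      (∀ j ∈ X, G.util j (flipVar (run S L) j) ≤ (2 + ε / 2) * G.util j (run S L)) ∧
      (∀ j ∈ Y, G.util j (flipVar (run S L) j) - G.util j (run S L) ≤ γ) ∧
      ∀ j, j ∉ X → j ∉ Y →
        G.util j (flipVar (run S L) j) - (2 + ε / 2) * G.util j (run S L) ≤
          G.util j (flipVar S j) - (2 + ε / 2) * G.util j S +
            32 * (X.card + Y.card) * β / ε := by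
  have hβ : 0 < β := by linarith
  set x : ℝ := (X.card : ℝ) with hx
  set y : ℝ := (Y.card : ℝ) with hy
  have hx0 : 0 ≤ x := Nat.cast_nonneg _
  have hy0 : 0 ≤ y := Nat.cast_nonneg _
  have hmem : ∀ L, Valid (G.PhaseMove X Y (2 + ε / 2) γ) S L → ∀ j ∈ L, j ∈ X ∨ j ∈ Y :=
    fun L hL => hL.forall_mem (p := fun i => i ∈ X ∨ i ∈ Y)
      (fun S j h => h.elim (fun h => Or.inl h.1) fun h => Or.inr h.1)
  have hW := G.touchWeight_le hYβ
  set m : ℝ := (x + y) * β with hm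
  have hxm : 0 ≤ x * β := by positivity
  have hym : 0 ≤ y * β := by positivity
  have hm0 : 0 ≤ m := by positivity
  have hmxy : m = x * β + y * β := by rw [hm]; ring
  have hmε : m ≤ m / ε := by rw [le_div_iff₀ hε]; nlinarith
  have key : ∀ L, Valid (G.PhaseMove X Y (2 + ε / 2) γ) S L →
      G.corePot X Y L S ≤ 7 * (m / ε) ∧ G.potential (run S L) - G.potential S ≤ 9 * (m / ε) := by
    intro L hL
    have h1 := G.corePot_le_gain (by linarith) hγ.le L S hL
    have h2 := G.gain_le_corePot L S (hmem L hL)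
    have h3 := G.corePot_stretch hcrit (Y := Y) hβ.le L S (run S L) hX
    have hP : ε * G.corePot X Y L S ≤ 7 * m := by nlinarith
    have hP' : G.corePot X Y L S ≤ 7 * (m / ε) := by
      rw [← mul_div_assoc, le_div_iff₀ hε]; linarith
    exact ⟨hP', by linarith⟩
  have hstep : ∀ S j, G.PhaseMove X Y (2 + ε / 2) γ S j →
      γ ≤ G.potential (flipVar S j) - G.potential S := by
    intro S j h
    rw [potential_flip]
    have h1 := G.maxUtil_le j S
    have hu := G.util_nonneg j S
    rcases h with h | h
    · have h2 := hXβ j h.1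
      nlinarith [h.2]
    · linarith [h.2]
  obtain ⟨L, hL, hlen, hstuck⟩ := G.exists_stuck hγ hstep fun L hL => (key L hL).2
  refine ⟨L, hL, ?_, ?_, ?_, ?_⟩
  · calc _ ≤ _ := hlen
      _ = _ := by rw [hm]; ring
  · intro j hj
    by_contra! h
    exact hstuck j (Or.inl ⟨hj, h⟩)
  · intro j hj
    by_contra! h
    exact hstuck j (Or.inr ⟨hj, by linarith⟩)
  · intro j hjX hjY
    have h1 := G.util_drop L S (hmem L hL) j
    have h2 := G.util_flip_rise L S (hmem L hL) j
      fun h => (hmem L hL j h).elim hjX hjY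
    have h3 := (key L hL).1
    have h4 : 32 * (x + y) * β / ε = 32 * (m / ε) := by rw [hm]; ring
    rw [h4]
    nlinarith

/-! ### All phases -/

/-- Improvement moves of players. -/
def Improving (G : PkFlipGame V C k) (S : V → Bool) (j : V) : Prop :=
  j ∈ G.N ∧ G.util j S < G.util j (flipVar S j)

open Classical in
/-- The block of the players whose maximum utility lies in `(b (i+1), b i]`. -/
noncomputable def block (G : PkFlipGame V C k) (b : ℕ → ℝ) (i : ℕ) : Finset V :=
  G.N.filter fun j => b (i + 1) < G.maxUtil j ∧ G.maxUtil j ≤ b i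

lemma block_disjoint (G : PkFlipGame V C k) {b : ℕ → ℝ} (hb : Antitone b) {i i' : ℕ}
    (h : i < i') {j : V} (hj : j ∈ G.block b i) : j ∉ G.block b i' := by
  intro hj'
  simp only [block, Finset.mem_filter] at hj hj'
  have := hb (show i + 1 ≤ i' from h)
  linarith [hj.2.1, hj'.2.2]

lemma sum_block_card_le (G : PkFlipGame V C k) {b : ℕ → ℝ} (hb : Antitone b) (M : ℕ) :
    ∑ i ∈ Finset.range M, (G.block b i).card ≤ G.N.card := by
  classical
  rw [← Finset.card_biUnion]
  · refine Finset.card_le_card fun j hj => ?_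
    simp only [Finset.mem_biUnion, block, Finset.mem_filter] at hj
    obtain ⟨i, -, h, -⟩ := hj
    exact h
  · intro i _ i' _ hne
    refine Finset.disjoint_left.2 ?_
    intro j hj hj'
    rcases lt_or_gt_of_ne hne with h | h
    · exact G.block_disjoint hb h hj hj'
    · exact G.block_disjoint hb h hj' hj

/-- The state before phase `i`: block `i` is ready for its phase, and the earlier blocks are in
approximate equilibrium up to an error that accumulates geometrically. The subtracted term
`b (i+1)` makes the geometric sum telescope. -/
lemma exists_phases (G : PkFlipGame V C k) (hcrit : G.OneCritical) {b : ℕ → ℝ} {g ε : ℝ}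
    (hε : 0 < ε) (hε1 : ε ≤ 1) (hg : 4 ≤ g) (hbpos : ∀ i, 0 < b i)
    (hbg : ∀ i, b i = g * b (i + 1)) (h0 : G.block b 0 = ∅) (S : V → Bool) (i : ℕ) :
    ∃ L : List V, Valid G.Improving S L ∧
      L.length ≤ 9 * g / ε *
        ∑ l ∈ Finset.range i, (((G.block b l).card : ℝ) + (G.block b (l + 1)).card) ∧
      (∀ j ∈ G.block b i,
        G.util j (flipVar (run S L) j) - G.util j (run S L) ≤ b (i + 1)) ∧
      ∀ l < i, ∀ j ∈ G.block b l,
        G.util j (flipVar (run S L) j) - (2 + ε / 2) * G.util j (run S L) ≤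
          128 * G.N.card / ε * (b (l + 2) - b (i + 1)) := by
  have hb : Antitone b := antitone_nat_of_succ_le fun i => by
    rw [hbg i]; nlinarith [hbpos (i + 1)]
  induction i with
  | zero => exact ⟨[], trivial, by simp, by simp [h0], by simp⟩
  | succ i ih =>
    obtain ⟨L, hL, hlen, hready, hdone⟩ := ih
    have hγ := hbpos (i + 2)
    have hβγ := hbg (i + 1)
    obtain ⟨L', hL', hlen', hX, hY, hother⟩ := G.exists_phase hcrit
      (X := G.block b i) (Y := G.block b (i + 1)) hε hε1 hγ (β := b (i + 1))
      (by rw [hβγ]; nlinarith)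
      (fun j hj => by simp only [block, Finset.mem_filter] at hj; exact hj.2.1.le)
      (fun j hj => by simp only [block, Finset.mem_filter] at hj; exact hj.2.2)
      (run S L) hready
    refine ⟨L ++ L', valid_append hL (hL'.mono ?_), ?_, ?_, ?_⟩
    · rintro S j (⟨hj, h⟩ | ⟨hj, h⟩)
      · refine ⟨by simp only [block, Finset.mem_filter] at hj; exact hj.1, ?_⟩
        nlinarith [G.util_nonneg j S]
      · exact ⟨by simp only [block, Finset.mem_filter] at hj; exact hj.1, by linarith⟩
    · rw [Finset.sum_range_succ, mul_add, List.length_append]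
      push_cast
      refine add_le_add hlen ?_
      rw [hβγ] at hlen'
      refine le_of_mul_le_mul_right (hlen'.trans_eq ?_) hγ
      ring
    · rw [run_append]; exact hY
    · rw [run_append]
      intro l hl j hj
      rcases Nat.lt_succ_iff_lt_or_eq.1 hl with hl | rfl
      · have h1 := hother j (fun h => G.block_disjoint hb hl hj h)
          (fun h => G.block_disjoint hb (Nat.lt_succ_of_lt hl) hj h)
        have h2 := hdone l hl j hj
        have hcard : ((G.block b i).card : ℝ) + (G.block b (i + 1)).card ≤ 2 * G.N.card := by
          have h3 : (G.block b i).card ≤ G.N.card := Finset.card_le_card (Finset.filter_subset _ _)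
          have h4 : (G.block b (i + 1)).card ≤ G.N.card :=
            Finset.card_le_card (Finset.filter_subset _ _)
          have h3' : ((G.block b i).card : ℝ) ≤ G.N.card := by exact_mod_cast h3
          have h4' : ((G.block b (i + 1)).card : ℝ) ≤ G.N.card := by exact_mod_cast h4
          linarith
        -- the new error `64 n b(i+1) / ε` fits, as `b (i+2) ≤ b (i+1) / 2`
        have h5 : 32 * (((G.block b i).card : ℝ) + (G.block b (i + 1)).card) * b (i + 1) / ε ≤
            128 * G.N.card / ε * (b (i + 1) - b (i + 2)) := by
          have h6 : 128 * G.N.card / ε * (b (i + 1) - b (i + 2)) =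
              128 * G.N.card * (b (i + 1) - b (i + 2)) / ε := by ring
          rw [h6]
          have h7 : b (i + 1) ≤ 2 * (b (i + 1) - b (i + 2)) := by rw [hβγ]; nlinarith
          have hn : (0 : ℝ) ≤ G.N.card := Nat.cast_nonneg _
          have hp := hbpos (i + 1)
          refine div_le_div_of_nonneg_right ?_ hε.le
          nlinarith
        have h8 : 128 * G.N.card / ε * (b (l + 2) - b (i + 2)) =
            128 * G.N.card / ε * (b (l + 2) - b (i + 1)) +
              128 * G.N.card / ε * (b (i + 1) - b (i + 2)) := by ring
        rw [show i + 1 + 1 = i + 2 from rfl, h8]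
        linarith
      · have := hX j hj
        simp only [sub_self, mul_zero]
        linarith

lemma exists_mem_block (G : PkFlipGame V C k) {b : ℕ → ℝ} {M : ℕ} {j : V} (hj : j ∈ G.N)
    (h0 : G.maxUtil j ≤ b 0) (hM : b M < G.maxUtil j) : ∃ l < M, j ∈ G.block b l := by
  classical
  have hex : ∃ m, b m < G.maxUtil j := ⟨M, hM⟩
  obtain ⟨l, hl⟩ : ∃ l, Nat.find hex = l + 1 := by
    refine Nat.exists_eq_succ_of_ne_zero fun h => ?_
    have := Nat.find_spec hex
    rw [h] at this
    linarith
  refine ⟨l, ?_, ?_⟩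
  · have := Nat.find_min' hex hM
    omega
  · have h1 := Nat.find_spec hex
    rw [hl] at h1
    have h2 := Nat.find_min hex (show l < Nat.find hex by omega)
    simp only [block, Finset.mem_filter]
    exact ⟨hj, h1, not_lt.1 h2⟩

/-- The quantitative result for every game in which each satisfied clause has at most one critical
variable. The ratio `1024 n / ε²` of consecutive block bounds keeps the accumulated error of a
player below `(ε/8)` times her maximum utility. -/
lemma exists_short_list (G : PkFlipGame V C k) (hcrit : G.OneCritical) {S : V → Bool}
    (hS : G.IsState S) {ε : ℝ} (hε : 0 < ε) (hε1 : ε ≤ 1) (hn : 1 ≤ G.N.card) :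
    ∃ L : List V, Valid G.Improving S L ∧
      (L.length : ℝ) ≤ 18432 * (G.N.card : ℝ) ^ 2 / ε ^ 3 ∧
      G.IsApproxEquilibrium (2 + ε) (run S L) := by
  have hn' : (1 : ℝ) ≤ G.N.card := by exact_mod_cast hn
  set n : ℝ := (G.N.card : ℝ) with hndef
  set g : ℝ := 1024 * n / ε ^ 2 with hgdef
  have hg : 4 ≤ g := by
    rw [hgdef, le_div_iff₀ (by positivity)]
    nlinarith
  set W : ℝ := ∑ j ∈ G.N, G.maxUtil j + 1 with hW
  have hWU : ∀ j ∈ G.N, G.maxUtil j ≤ W := fun j hj => by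
    have := Finset.single_le_sum (fun i _ => G.maxUtil_nonneg i) hj
    linarith
  have hWpos : 0 < W := by
    have := Finset.sum_nonneg fun i (_ : i ∈ G.N) => G.maxUtil_nonneg i
    linarith
  -- indices are shifted so that `b 1 = W` and block `0` is empty
  set b : ℕ → ℝ := fun i => W * g / g ^ i with hbdef
  have hgpos : 0 < g := by linarith
  have hbpos : ∀ i, 0 < b i := fun i => by positivity
  have hbg : ∀ i, b i = g * b (i + 1) := fun i => by
    simp only [hbdef, pow_succ]
    field_simp
  have hb : Antitone b := antitone_nat_of_succ_le fun i => by
    rw [hbg i]; nlinarith [hbpos (i + 1)]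
  have hb1 : b 1 = W := by simp only [hbdef]; field_simp
  have h0 : G.block b 0 = ∅ := by
    refine Finset.eq_empty_of_forall_notMem fun j hj => ?_
    simp only [block, Finset.mem_filter, zero_add, hb1] at hj
    linarith [hWU j hj.1, hj.2.1]
  have hlim : Filter.Tendsto b Filter.atTop (nhds 0) :=
    tendsto_const_nhds.div_atTop (tendsto_pow_atTop_atTop_of_one_lt (by linarith))
  obtain ⟨M, hM⟩ : ∃ M, ∀ j ∈ G.N, 0 < G.maxUtil j → b M < G.maxUtil j := by
    refine Filter.Eventually.exists (f := Filter.atTop) ?_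
    rw [Filter.eventually_all_finset]
    intro j _
    by_cases hj : 0 < G.maxUtil j
    · filter_upwards [hlim.eventually_lt_const hj] with M h _ using h
    · exact Filter.Eventually.of_forall fun M h => absurd h hj
  obtain ⟨L, hL, hlen, -, hdone⟩ := G.exists_phases hcrit hε hε1 hg hbpos hbg h0 S M
  refine ⟨L, hL, ?_, G.isState_run hS (hL.forall_mem fun S j h => h.1), ?_⟩
  · have h1 : (∑ l ∈ Finset.range M, ((G.block b l).card : ℝ)) ≤ n := by
      rw [hndef]
      exact_mod_cast G.sum_block_card_le hb M
    have h2 : (∑ l ∈ Finset.range M, ((G.block b (l + 1)).card : ℝ)) ≤ n := by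
      have h3 := G.sum_block_card_le hb (M + 1)
      rw [Finset.sum_range_succ'] at h3
      rw [hndef]
      exact_mod_cast le_of_add_le_left h3
    rw [Finset.sum_add_distrib] at hlen
    calc (L.length : ℝ) ≤ 9 * g / ε * (n + n) :=
          hlen.trans (mul_le_mul_of_nonneg_left (add_le_add h1 h2)
            (div_nonneg (by linarith) hε.le))
      _ = 18432 * n ^ 2 / ε ^ 3 := by
          rw [hgdef]; field_simp; norm_num
  · intro j hj
    have hu := G.util_nonneg j (run S L)
    rcases (G.maxUtil_nonneg j).eq_or_lt with h | h
    · have := G.util_le_maxUtil j (flipVar (run S L) j)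
      nlinarith
    · obtain ⟨l, hl, hjl⟩ := G.exists_mem_block hj
        ((hWU j hj).trans (hb1 ▸ hb (Nat.zero_le 1))) (hM j hj h)
      have h1 := hdone l hl j hjl
      simp only [block, Finset.mem_filter] at hjl
      have h2 := G.maxUtil_le j (run S L)
      have h3 : 128 * n / ε * b (l + 2) = ε / 8 * b (l + 1) := by
        rw [hbg (l + 1), hgdef]
        field_simp
        ring
      have h4 : 0 ≤ 128 * n / ε * b (M + 1) :=
        mul_nonneg (div_nonneg (by linarith) hε.le) (hbpos (M + 1)).le
      have h5 : ε / 8 * b (l + 1) ≤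
          ε / 8 * (G.util j (run S L) + G.util j (flipVar (run S L) j)) := by
        refine mul_le_mul_of_nonneg_left ?_ (by linarith)
        linarith [hjl.2.1]
      rw [mul_sub, h3] at h1
      by_contra! hcon
      nlinarith [mul_pos (show 0 < 1 - ε / 8 by linarith) (sub_pos.2 hcon),
        mul_nonneg (mul_nonneg hε.le (sub_nonneg.2 hε1)) hu]

end PkFlipGame

/-! ### Not-all-equal clauses -/

/-- If flipping `i` breaks a satisfied clause, the literal of `i` differs from all others; a third
literal shows that this cannot hold for two variables. -/
lemma NaeFlipGame.oneCritical (G : NaeFlipGame V C 3 k) : G.toPkFlipGame.OneCritical := by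
  classical
  intro c S i j hi hj hs hsi hsj
  by_contra hij
  have hcard : 3 ≤ (G.vars c).card := by
    rw [G.vars_eq, List.toFinset_card_of_nodup (G.lits_nodup c), List.length_map]
    exact G.lits_length_lb c
  obtain ⟨v, hv, hvij⟩ : ∃ v ∈ G.vars c, v ∉ ({i, j} : Finset V) := by
    apply Finset.exists_mem_notMem_of_card_lt_card
    have := Finset.card_le_two (a := i) (b := j)
    omega
  simp only [Finset.mem_insert, Finset.mem_singleton, not_or] at hvij
  have hlit : ∀ u ∈ G.vars c, ∃ s, (u, s) ∈ G.lits c := by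
    intro u hu
    rw [G.vars_eq] at hu
    simpa using hu
  have hall : ∀ u, G.sat c (flipVar S u) = false → ∀ l₁ ∈ G.lits c, ∀ l₂ ∈ G.lits c,
      litVal (flipVar S u) l₁ = litVal (flipVar S u) l₂ := by
    intro u hu l₁ h₁ l₂ h₂
    by_contra h
    have := (G.sat_iff c (flipVar S u)).2 ⟨l₁, h₁, l₂, h₂, h⟩
    simp [hu] at this
  obtain ⟨a, ha⟩ := hlit i hi
  obtain ⟨a', ha'⟩ := hlit j hj
  obtain ⟨e, he⟩ := hlit v hv
  have e1 := hall i hsi _ ha _ he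
  have e2 := hall i hsi _ ha' _ he
  have e3 := hall j hsj _ ha _ he
  simp only [litVal, flipVar, Function.update_self, Function.update_of_ne hvij.1,
    Function.update_of_ne hvij.2, Function.update_of_ne hij,
    Function.update_of_ne (Ne.symm hij)] at e1 e2 e3
  revert e1 e3
  cases S i <;> cases a <;> cases S v <;> cases e <;> simp


/-- There is a universal constant `C > 0` such that in every `nae`-`(3,k)`-Flip
game with `n` players, from every initial state there is a sequence of at most
`C·n³·k²/ε⁴` improvement moves ending at a `(2+ε)`-approximate pure Nash
equilibrium, for every `ε ∈ (0,1]`. -/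
theorem nae3_short_sequence :
    ∃ Cst : ℝ, 0 < Cst ∧
      ∀ (V C : Type) [Fintype V] [DecidableEq V] [Fintype C] (k : ℕ), 3 ≤ k →
        ∀ (G : NaeFlipGame V C 3 k) (Sin : V → Bool), G.toPkFlipGame.IsState Sin →
          ∀ ε : ℝ, 0 < ε → ε ≤ 1 →
            ∃ (T : ℕ) (Sq : ℕ → V → Bool),
              (T : ℝ) ≤ Cst * (G.toPkFlipGame.N.card : ℝ) ^ 3 * (k : ℝ) ^ 2 / ε ^ 4 ∧
              Sq 0 = Sin ∧
              (∀ t < T, ∃ j ∈ G.toPkFlipGame.N,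
                Sq (t + 1) = flipVar (Sq t) j ∧
                G.toPkFlipGame.util j (Sq t) < G.toPkFlipGame.util j (Sq (t + 1))) ∧
              G.toPkFlipGame.IsApproxEquilibrium (2 + ε) (Sq T) := by
  refine ⟨18432, by norm_num, ?_⟩
  intro V C _ _ _ k hk G Sin hSin ε hε hε1
  rcases Nat.eq_zero_or_pos G.N.card with hn | hn
  · refine ⟨0, fun _ => Sin, by simp [hn], rfl, by simp, hSin, ?_⟩
    simp [Finset.card_eq_zero.1 hn]
  obtain ⟨L, hL, hlen, heq⟩ :=
    G.toPkFlipGame.exists_short_list G.oneCritical hSin hε hε1 hn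
  refine ⟨L.length, fun t => PkFlipGame.run Sin (L.take t), ?_, by simp [PkFlipGame.run], ?_,
    by simpa using heq⟩
  · refine hlen.trans ?_
    have hn' : (1 : ℝ) ≤ G.N.card := by exact_mod_cast hn
    have hk' : (1 : ℝ) ≤ k := by exact_mod_cast (by omega : 1 ≤ k)
    have h1 : (G.N.card : ℝ) ^ 2 ≤ (G.N.card : ℝ) ^ 3 * (k : ℝ) ^ 2 := by
      calc (G.N.card : ℝ) ^ 2 ≤ (G.N.card : ℝ) ^ 3 := pow_le_pow_right₀ hn' (by norm_num)
        _ ≤ _ := le_mul_of_one_le_right (by positivity) (one_le_pow₀ hk')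
    have h2 : ε ^ 4 ≤ ε ^ 3 := pow_le_pow_of_le_one hε.le hε1 (by norm_num)
    rw [mul_assoc]
    gcongr
  · intro t ht
    obtain ⟨j, ⟨hjN, hj⟩, hj'⟩ := hL.take_succ t ht
    exact ⟨j, hjN, hj', hj.trans_eq (by rw [← hj'])⟩
end
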